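/- arXiv:1510.07561 — 2 statements merged into one kernel-verified Lean document; each statement's English description precedes it below -/
import Mathlib

section
/- Let C be a Weyl candidate on Minkowski space V with electric part E = E(C) and magnetic part B = B(C) with respect to a unit timelike vector n. Then the quadratic Weyl scalars split as: (1/8) C^{μνλρ} C_{μνλρ} = E_{μν}E^{μν} − B_{μν}B^{μν} and (1/8) C^{μνλρ} (C*)_{μνλρ} = 2 E^{μν}B_{μν}, where all indices are raised with η. -/
noncomputable section

/-- Minkowski space `V = ℝ⁴`. -/
abbrev V4 : Type := Fin 4 → ℝ

/-- The Minkowski bilinear form of signature `(-,+,+,+)`. -/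
def η (x y : V4) : ℝ := -(x 0 * y 0) + x 1 * y 1 + x 2 * y 2 + x 3 * y 3

/-- The standard basis of `V4`. -/
def e4 (a : Fin 4) : V4 := Pi.single a 1

/-- Components of the Minkowski metric `diag(-1,1,1,1)` (its own inverse). -/
def ηm (a b : Fin 4) : ℝ := if a = b then (if a = (0 : Fin 4) then -1 else 1) else 0

/-- A 4-linear form on `V4`, given by its components in the standard basis. -/
abbrev T4 : Type := Fin 4 → Fin 4 → Fin 4 → Fin 4 → ℝ

/-- A bilinear form on `V4`, given by its components in the standard basis. -/
abbrev T2 : Type := Fin 4 → Fin 4 → ℝ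

/-- Evaluation of a 4-linear form (given by components) on vectors. -/
def eval4 (W : T4) (x y z w : V4) : ℝ :=
  ∑ a : Fin 4, ∑ b : Fin 4, ∑ c : Fin 4, ∑ d : Fin 4, W a b c d * x a * y b * z c * w d

/-- The alternating volume 4-form with `vol(e₀,e₁,e₂,e₃) = 1`. -/
def volv (x y z w : V4) : ℝ := Matrix.det (Matrix.of ![x, y, z, w])

/-- Components `η_{αβγδ}` of the volume form. -/
def volc (a b c d : Fin 4) : ℝ := volv (e4 a) (e4 b) (e4 c) (e4 d)

/-- Left dual `(*W)_{μνλρ} = ½ η_{μν}{}^{αβ} W_{αβλρ}`. -/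
def leftDual (W : T4) : T4 := fun μ ν lam ρ =>
  (1/2) * ∑ γ : Fin 4, ∑ δ : Fin 4, ∑ a : Fin 4, ∑ b : Fin 4,
    volc μ ν γ δ * ηm γ a * ηm δ b * W a b lam ρ

/-- Right dual `(W*)_{μνλρ} = ½ W_{μν}{}^{αβ} η_{αβλρ}`. -/
def rightDual (W : T4) : T4 := fun μ ν lam ρ =>
  (1/2) * ∑ γ : Fin 4, ∑ δ : Fin 4, ∑ a : Fin 4, ∑ b : Fin 4,
    W μ ν a b * ηm a γ * ηm b δ * volc γ δ lam ρ

/-- A Weyl candidate: pair antisymmetries, pair exchange, first Bianchi, trace-free. -/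
def IsWeyl (W : T4) : Prop :=
  (∀ x y z w : V4, eval4 W x y z w = - eval4 W y x z w) ∧
  (∀ x y z w : V4, eval4 W x y z w = - eval4 W x y w z) ∧
  (∀ x y z w : V4, eval4 W x y z w = eval4 W z w x y) ∧
  (∀ x y z w : V4, eval4 W x y z w + eval4 W x z w y + eval4 W x w y z = 0) ∧
  (∀ x y : V4, ∑ a : Fin 4, ∑ b : Fin 4, ηm a b * eval4 W (e4 a) x (e4 b) y = 0)

/-- Electric part `E(W)_{ab} = W(e_a, n, e_b, n)`. -/
def Epart (W : T4) (n : V4) : T2 := fun a b => eval4 W (e4 a) n (e4 b) n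

/-- Magnetic part `B(W)_{ab} = (W*)(e_a, n, e_b, n)`. -/
def Bpart (W : T4) (n : V4) : T2 := fun a b => eval4 (rightDual W) (e4 a) n (e4 b) n

/-- Raise both indices of a bilinear form's components. -/
def up2 (S : T2) : T2 := fun a b => ∑ c : Fin 4, ∑ d : Fin 4, ηm a c * ηm b d * S c d

/-- Full contraction `S_{ab} T^{ab}`. -/
def contr2 (S T : T2) : ℝ := ∑ a : Fin 4, ∑ b : Fin 4, S a b * up2 T a b

/-- Raise all four indices with `η`. -/
def up4 (W : T4) : T4 := fun a b c d =>
  ∑ a' : Fin 4, ∑ b' : Fin 4, ∑ c' : Fin 4, ∑ d' : Fin 4,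
    ηm a a' * ηm b b' * ηm c c' * ηm d d' * W a' b' c' d'

/-- Full contraction `S^{μνλρ} T_{μνλρ}`. -/
def contr4 (S T : T4) : ℝ :=
  ∑ a : Fin 4, ∑ b : Fin 4, ∑ c : Fin 4, ∑ d : Fin 4, up4 S a b c d * T a b c d

/-!
For bivectors `F`, `G` and their Hodge duals `*F`, `*G`, any vector `n` splits the scalar product:
`½ F_{ab} G^{ab} η(n,n) = η(F n, G n) - η(*F n, *G n)`. Applying this to the last pair of indices of
two double forms `C`, `D`, and then to the first pair, gives
`¼ C·D η(n,n)² = (E(C)·E(D) - E(*C)·E(*D)) - (E(C*)·E(D*) - E(*C*)·E(*D*))`.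
If left and right duals agree, then `E(*C) = E(C*) = B(C)` and `*C* = **C = -C`, so the right-hand
side is `2 (E(C)·E(D) - B(C)·B(D))`. Taking `D = C` gives the first scalar; taking `D = C*`, for
which `E(D) = B(C)` and `B(D) = -E(C)`, gives the second. Trace-freeness is what makes the two duals
of a Weyl candidate agree.
-/

section Contractions

theorem η_eq_sum (x y : V4) : η x y = ∑ a, ηm a a * (x a * y a) := by
  simp [η, ηm, Fin.sum_univ_four]

theorem contr2_eq_sum (F G : T2) :
    contr2 F G = ∑ a, ∑ b, ηm a a * ηm b b * (F a b * G a b) := by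
  simp only [contr2, up2]
  refine Finset.sum_congr rfl fun a _ => Finset.sum_congr rfl fun b _ => ?_
  simp [ηm, ← mul_assoc]

theorem contr4_eq_sum_contr2 (C D : T4) :
    contr4 C D = ∑ a, ∑ b, ηm a a * ηm b b * contr2 (C a b) (D a b) := by
  simp only [contr4, up4, contr2_eq_sum, Finset.mul_sum]
  refine Finset.sum_congr rfl fun a _ => Finset.sum_congr rfl fun b _ =>
    Finset.sum_congr rfl fun c _ => Finset.sum_congr rfl fun d _ => ?_
  simp [ηm]

theorem contr2_comm (F G : T2) : contr2 F G = contr2 G F := by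
  simp only [contr2_eq_sum, mul_comm (F _ _)]

theorem contr2_neg_right (F G : T2) : contr2 F (-G) = -contr2 F G := by
  simp [contr2_eq_sum]

theorem contr2_neg_neg (F G : T2) : contr2 (-F) (-G) = contr2 F G := by
  simp [contr2_eq_sum]

theorem eval4_e4 (W : T4) (a b c d : Fin 4) :
    eval4 W (e4 a) (e4 b) (e4 c) (e4 d) = W a b c d := by
  simp [eval4, e4, Pi.single_apply]

end Contractions

section VolumeForm

theorem volv_eq_sum_minors (x y z w : V4) :
    volv x y z w =
      (x 0 * y 1 - x 1 * y 0) * (z 2 * w 3 - z 3 * w 2)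
      - (x 0 * y 2 - x 2 * y 0) * (z 1 * w 3 - z 3 * w 1)
      + (x 0 * y 3 - x 3 * y 0) * (z 1 * w 2 - z 2 * w 1)
      + (x 1 * y 2 - x 2 * y 1) * (z 0 * w 3 - z 3 * w 0)
      - (x 1 * y 3 - x 3 * y 1) * (z 0 * w 2 - z 2 * w 0)
      + (x 2 * y 3 - x 3 * y 2) * (z 0 * w 1 - z 1 * w 0) := by
  simp only [volv, Matrix.det_succ_row_zero, Matrix.det_unique, Matrix.of_apply,
    Matrix.submatrix_apply, Matrix.submatrix_submatrix, Function.comp_apply, Matrix.cons_val,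
    Matrix.cons_val', Matrix.cons_val_fin_one, Matrix.cons_val_zero, Matrix.cons_val_one,
    Fin.sum_univ_succ, Fin.succAbove, Fin.succ_zero_eq_one, Fin.succ_one_eq_two, Fin.reduceSucc,
    Fin.default_eq_zero, Fin.isValue, Fin.castSucc_zero, Fin.castSucc_one, Fin.reduceCastSucc,
    Fin.castSucc_succ, Fin.reduceLT, Fin.reduceEq, Fin.lt_one_iff, Fin.succ_pos, not_lt_zero,
    lt_self_iff_false, if_true, if_false, Finset.univ_unique, Finset.sum_singleton,
    Fin.coe_ofNat_eq_mod, Fin.val_succ, Fin.val_eq_zero, Nat.succ_eq_add_one, Nat.reduceAdd,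
    Nat.zero_mod, zero_add]
  ring

theorem volc_swap_pairs (a b c d : Fin 4) : volc a b c d = volc c d a b := by
  simp only [volc, volv_eq_sum_minors]
  ring

theorem volc_swap_right (a b c d : Fin 4) : volc a b c d = -volc a b d c := by
  simp only [volc, volv_eq_sum_minors]
  ring

end VolumeForm

section Bivectors

/-- Bivectors (2-forms), given by their components. -/
def IsBivector (F : T2) : Prop := ∀ a b, F a b = -F b a

/-- The Hodge dual `(*F)_{cd} = ½ F^{ab} η_{abcd}` of a bivector. -/
def hodgeDual (F : T2) : T2 := fun c d =>
  (1/2) * ∑ γ : Fin 4, ∑ δ : Fin 4, ∑ a : Fin 4, ∑ b : Fin 4,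
    F a b * ηm a γ * ηm b δ * volc γ δ c d

theorem hodgeDual_eq_sum (F : T2) (c d : Fin 4) :
    hodgeDual F c d = (1/2) * ∑ γ, ∑ δ, ηm γ γ * ηm δ δ * (F γ δ * volc γ δ c d) := by
  simp only [hodgeDual]
  congr 1
  refine Finset.sum_congr rfl fun γ _ => Finset.sum_congr rfl fun δ _ => ?_
  simp [ηm, mul_comm]

theorem hodgeDual_neg (F : T2) : hodgeDual (-F) = -hodgeDual F := by
  funext c d
  simp [hodgeDual]

theorem isBivector_hodgeDual (F : T2) : IsBivector (hodgeDual F) := fun c d => by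
  simp only [hodgeDual, volc_swap_right _ _ c d, mul_neg, Finset.sum_neg_distrib]

namespace IsBivector

variable {F G : T2}

theorem apply_self (hF : IsBivector F) (a : Fin 4) : F a a = 0 := self_eq_neg.mp (hF a a)

theorem eq_of_entries (hF : IsBivector F) :
    F = ![![0, F 0 1, F 0 2, F 0 3],
          ![-F 0 1, 0, F 1 2, F 1 3],
          ![-F 0 2, -F 1 2, 0, F 2 3],
          ![-F 0 3, -F 1 3, -F 2 3, 0]] := by
  funext a b
  fin_cases a <;> fin_cases b <;> first | exact hF.apply_self _ | exact hF _ _ | rfl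

theorem ext (hF : IsBivector F) (hG : IsBivector G) (h : ∀ a b, a < b → F a b = G a b) :
    F = G := by
  rw [hF.eq_of_entries, hG.eq_of_entries]
  simp [h]

theorem hodgeDual_eq_of_entries (hF : IsBivector F) :
    hodgeDual F = ![![0, F 2 3, -F 1 3, F 1 2],
                    ![-F 2 3, 0, -F 0 3, F 0 2],
                    ![F 1 3, F 0 3, 0, -F 0 1],
                    ![-F 1 2, -F 0 2, F 0 1, 0]] := by
  have hentries : hodgeDual F 0 1 = F 2 3 ∧ hodgeDual F 0 2 = -F 1 3 ∧ hodgeDual F 0 3 = F 1 2 ∧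
      hodgeDual F 1 2 = -F 0 3 ∧ hodgeDual F 1 3 = F 0 2 ∧ hodgeDual F 2 3 = -F 0 1 := by
    rw [hF.eq_of_entries]
    refine ⟨?_, ?_, ?_, ?_, ?_, ?_⟩ <;>
    simp [hodgeDual, ηm, volc, volv_eq_sum_minors, e4, Fin.sum_univ_four, ← two_mul]
  obtain ⟨h01, h02, h03, h12, h13, h23⟩ := hentries
  rw [(isBivector_hodgeDual F).eq_of_entries, h01, h02, h03, h12, h13, h23]
  simp only [neg_neg]

theorem hodgeDual_hodgeDual (hF : IsBivector F) : hodgeDual (hodgeDual F) = -F := by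
  rw [(isBivector_hodgeDual F).hodgeDual_eq_of_entries, hF.hodgeDual_eq_of_entries]
  conv_rhs => rw [hF.eq_of_entries]
  simp

open Matrix in
theorem contr2_mul_η (hF : IsBivector F) (hG : IsBivector G) (n : V4) :
    (1/2) * contr2 F G * η n n =
      η (of F *ᵥ n) (of G *ᵥ n) - η (of (hodgeDual F) *ᵥ n) (of (hodgeDual G) *ᵥ n) := by
  rw [hF.hodgeDual_eq_of_entries, hG.hodgeDual_eq_of_entries, hF.eq_of_entries, hG.eq_of_entries]
  simp only [contr2_eq_sum, ηm, η, mulVec, dotProduct, of_apply, Fin.sum_univ_four, Fin.reduceEq,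
    Fin.isValue, if_true, if_false, cons_val, cons_val', cons_val_fin_one, cons_val_zero,
    cons_val_one]
  ring

end IsBivector

end Bivectors

section DoubleForms

/-- Double 2-forms: 4-linear forms antisymmetric in the first and in the last pair of indices. -/
structure IsDoubleForm (W : T4) : Prop where
  left : ∀ c d, IsBivector fun a b => W a b c d
  right : ∀ a b, IsBivector (W a b)

theorem rightDual_apply (W : T4) (a b : Fin 4) : rightDual W a b = hodgeDual (W a b) := rfl

theorem leftDual_apply (W : T4) (a b c d : Fin 4) :
    leftDual W a b c d = hodgeDual (fun i j => W i j c d) a b := by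
  simp only [leftDual, hodgeDual, volc_swap_pairs a b]
  congr 1
  refine Finset.sum_congr rfl fun γ _ => Finset.sum_congr rfl fun δ _ => ?_
  simp [ηm, mul_comm]

namespace IsDoubleForm

variable {C : T4}

theorem isDoubleForm_leftDual (hC : IsDoubleForm C) : IsDoubleForm (leftDual C) where
  left c d a b := by
    simpa only [leftDual_apply] using isBivector_hodgeDual (fun i j => C i j c d) a b
  right a b c d := by
    have hswap : (fun i j => C i j c d) = -fun i j => C i j d c :=
      funext₂ fun i j => hC.right i j c d
    simp only [leftDual_apply, hswap, hodgeDual_neg, Pi.neg_apply]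

theorem isDoubleForm_rightDual (hC : IsDoubleForm C) : IsDoubleForm (rightDual C) where
  left c d a b := by
    have hswap : C a b = -C b a := funext₂ fun c d => hC.left c d a b
    simp only [rightDual_apply, hswap, hodgeDual_neg, Pi.neg_apply]
  right a b := isBivector_hodgeDual (C a b)

theorem leftDual_leftDual (hC : IsDoubleForm C) : leftDual (leftDual C) = -C := by
  funext a b c d
  simp only [leftDual_apply, (hC.left c d).hodgeDual_hodgeDual, Pi.neg_apply]

theorem rightDual_rightDual (hC : IsDoubleForm C) : rightDual (rightDual C) = -C := by
  funext a b
  exact (hC.right a b).hodgeDual_hodgeDual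

theorem ext {D : T4} (hC : IsDoubleForm C) (hD : IsDoubleForm D)
    (h : ∀ a b c d, a < b → c < d → C a b c d = D a b c d) : C = D := by
  funext a b c d
  refine congrFun₂ ((hC.left c d).ext (hD.left c d) fun a b hab => ?_) a b
  exact congrFun₂ ((hC.right a b).ext (hD.right a b) fun c d hcd => h a b c d hab hcd) c d

end IsDoubleForm

end DoubleForms

section Ricci

/-- The Ricci contraction `R_{bd} = η^{ac} W_{abcd}`. -/
def ricci (W : T4) : T2 := fun b d => ∑ a, ∑ c, ηm a c * W a b c d

namespace IsDoubleForm

variable {C : T4}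

/-- Together with the pair symmetry, these nine relations are the components of `*C = C*`. -/
theorem entries_of_ricci_eq (hC : IsDoubleForm C) {s : ℝ}
    (hRic : ∀ b d, ricci C b d = s * ηm b d) :
    (C 2 3 2 3 = -C 0 1 0 1 ∧ C 1 3 1 3 = -C 0 2 0 2 ∧ C 1 2 1 2 = -C 0 3 0 3) ∧
    (C 1 3 2 3 = C 0 1 0 2 ∧ C 1 2 2 3 = -C 0 1 0 3 ∧ C 1 2 1 3 = C 0 2 0 3) ∧
    (C 0 3 2 3 = C 0 1 1 2 ∧ C 0 2 2 3 = -C 0 1 1 3 ∧ C 0 3 1 3 = -C 0 2 1 2) := by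
  have hentries (b d : Fin 4) : -C 0 b 0 d + C 1 b 1 d + C 2 b 2 d + C 3 b 3 d = s * ηm b d := by
    simpa [ricci, ηm, Fin.sum_univ_four] using hRic b d
  have hleft (i j c d : Fin 4) : C i j c d = -C j i c d := hC.left c d i j
  have hright (a b i j : Fin 4) : C a b i j = -C a b j i := hC.right a b i j
  have hleft_self (i c d : Fin 4) : C i i c d = 0 := (hC.left c d).apply_self i
  have hright_self (a b i : Fin 4) : C a b i i = 0 := (hC.right a b).apply_self i
  have h00 := hentries 0 0
  have h01 := hentries 0 1
  have h02 := hentries 0 2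
  have h03 := hentries 0 3
  have h11 := hentries 1 1
  have h12 := hentries 1 2
  have h13 := hentries 1 3
  have h22 := hentries 2 2
  have h23 := hentries 2 3
  have h33 := hentries 3 3
  simp only [ηm, hleft_self, hright_self, hleft 1 0, hleft 2 0, hleft 3 0, hleft 2 1, hleft 3 1,
    hleft 3 2, hright _ _ 1 0, hright _ _ 2 0, hright _ _ 3 0, hright _ _ 2 1, hright _ _ 3 1,
    hright _ _ 3 2, Fin.reduceEq, if_true, if_false]
    at h00 h01 h02 h03 h11 h12 h13 h22 h23 h33
  refine ⟨⟨?_, ?_, ?_⟩, ⟨?_, ?_, ?_⟩, ?_, ?_, ?_⟩ <;> linarith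

theorem leftDual_eq_rightDual_of_ricci_eq (hC : IsDoubleForm C) {s : ℝ}
    (hRic : ∀ b d, ricci C b d = s * ηm b d) (hpair : ∀ a b c d, C a b c d = C c d a b) :
    leftDual C = rightDual C := by
  obtain ⟨⟨h2323, h1313, h1212⟩, ⟨h1323, h1223, h1213⟩, h0323, h0223, h0313⟩ :=
    hC.entries_of_ricci_eq hRic
  refine hC.isDoubleForm_leftDual.ext hC.isDoubleForm_rightDual fun a b c d hab hcd => ?_
  rw [leftDual_apply, rightDual_apply, (hC.left c d).hodgeDual_eq_of_entries,
    (hC.right a b).hodgeDual_eq_of_entries]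
  fin_cases a <;> fin_cases b <;> first | exact absurd hab (by decide) | skip
  all_goals fin_cases c <;> fin_cases d <;> first | exact absurd hcd (by decide) | skip
  all_goals
    simp [h2323, h1313, h1212, h1323, h1223, h1213, h0323, h0223, h0313, hpair 0 2 0 1,
      hpair 0 3 0 1, hpair 1 2 0 1, hpair 1 3 0 1, hpair 2 3 0 1, hpair 0 3 0 2, hpair 1 2 0 2,
      hpair 1 3 0 2, hpair 2 3 0 2, hpair 1 2 0 3, hpair 1 3 0 3, hpair 2 3 0 3, hpair 1 3 1 2,
      hpair 2 3 1 2, hpair 2 3 1 3]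

end IsDoubleForm

end Ricci

section ElectricMagnetic

open Matrix

/-- The bivectors `W_{abcd} n^d`, indexed by `c`. -/
def contractLast (W : T4) (n : V4) (c : Fin 4) : T2 := fun a b => ∑ d, W a b c d * n d

theorem contractLast_leftDual (W : T4) (n : V4) (c : Fin 4) :
    contractLast (leftDual W) n c = hodgeDual (contractLast W n c) := by
  funext a b
  simp only [contractLast, leftDual_apply, hodgeDual_eq_sum, Finset.mul_sum, Finset.sum_mul]
  rw [Finset.sum_comm]
  refine Finset.sum_congr rfl fun γ _ => ?_
  rw [Finset.sum_comm]
  refine Finset.sum_congr rfl fun δ _ => Finset.sum_congr rfl fun d _ => ?_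
  ring

theorem Epart_eq_mulVec (W : T4) (n : V4) (a c : Fin 4) :
    Epart W n a c = (of (contractLast W n c) *ᵥ n) a := by
  simp [Epart, eval4, e4, Pi.single_apply, contractLast, mulVec, dotProduct, Finset.sum_mul,
    mul_right_comm]

theorem Epart_neg (W : T4) (n : V4) : Epart (-W) n = -Epart W n := by
  funext a b
  simp [Epart, eval4]

theorem Bpart_eq_Epart_rightDual (W : T4) (n : V4) : Bpart W n = Epart (rightDual W) n := rfl

theorem sum_contr2_contractLast (C D : T4) (n : V4) :
    ∑ c, ηm c c * contr2 (contractLast C n c) (contractLast D n c) =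
      ∑ a, ∑ b, ηm a a * ηm b b * η (of (C a b) *ᵥ n) (of (D a b) *ᵥ n) := by
  simp only [contr2_eq_sum, η_eq_sum, Finset.mul_sum]
  rw [Finset.sum_comm]
  refine Finset.sum_congr rfl fun a _ => ?_
  rw [Finset.sum_comm]
  refine Finset.sum_congr rfl fun b _ => Finset.sum_congr rfl fun c _ => ?_
  simp only [contractLast, mulVec, dotProduct, of_apply]
  ring

theorem contr2_Epart (C D : T4) (n : V4) :
    contr2 (Epart C n) (Epart D n) =
      ∑ c, ηm c c * η (of (contractLast C n c) *ᵥ n) (of (contractLast D n c) *ᵥ n) := by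
  simp only [contr2_eq_sum, Epart_eq_mulVec, η_eq_sum, Finset.mul_sum]
  rw [Finset.sum_comm]
  refine Finset.sum_congr rfl fun c _ => Finset.sum_congr rfl fun a _ => ?_
  ring

namespace IsDoubleForm

variable {C D : T4}

theorem isBivector_contractLast (hC : IsDoubleForm C) (n : V4) (c : Fin 4) :
    IsBivector (contractLast C n c) := fun a b => by
  simp only [contractLast, hC.left _ _ a b, neg_mul, Finset.sum_neg_distrib]

theorem contr4_mul_η (hC : IsDoubleForm C) (hD : IsDoubleForm D) (n : V4) :
    (1/2) * contr4 C D * η n n =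
      ∑ c, ηm c c * contr2 (contractLast C n c) (contractLast D n c) -
        ∑ c, ηm c c * contr2 (contractLast (rightDual C) n c) (contractLast (rightDual D) n c) := by
  simp only [sum_contr2_contractLast, contr4_eq_sum_contr2, rightDual_apply,
    ← Finset.sum_sub_distrib, ← mul_sub, ← (hC.right _ _).contr2_mul_η (hD.right _ _),
    Finset.mul_sum, Finset.sum_mul]
  refine Finset.sum_congr rfl fun a _ => Finset.sum_congr rfl fun b _ => ?_
  ring

theorem sum_contr2_contractLast_mul_η (hC : IsDoubleForm C) (hD : IsDoubleForm D) (n : V4) :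
    (1/2) * (∑ c, ηm c c * contr2 (contractLast C n c) (contractLast D n c)) * η n n =
      contr2 (Epart C n) (Epart D n) - contr2 (Epart (leftDual C) n) (Epart (leftDual D) n) := by
  simp only [contr2_Epart, contractLast_leftDual, ← Finset.sum_sub_distrib, ← mul_sub,
    ← (hC.isBivector_contractLast n _).contr2_mul_η (hD.isBivector_contractLast n _),
    Finset.mul_sum, Finset.sum_mul]
  refine Finset.sum_congr rfl fun c _ => ?_
  ring

theorem contr4_mul_η_sq (hC : IsDoubleForm C) (hD : IsDoubleForm D)
    (hCdual : leftDual C = rightDual C) (hDdual : leftDual D = rightDual D) (n : V4) :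
    (1/8) * contr4 C D * η n n ^ 2 =
      contr2 (Epart C n) (Epart D n) - contr2 (Bpart C n) (Bpart D n) := by
  have hCdouble : leftDual (rightDual C) = -C := by rw [← hCdual, hC.leftDual_leftDual]
  have hDdouble : leftDual (rightDual D) = -D := by rw [← hDdual, hD.leftDual_leftDual]
  have hlast := hC.contr4_mul_η hD n
  have hfirst := hC.sum_contr2_contractLast_mul_η hD n
  have hfirst_dual :=
    hC.isDoubleForm_rightDual.sum_contr2_contractLast_mul_η hD.isDoubleForm_rightDual n
  rw [hCdual, hDdual] at hfirst
  rw [hCdouble, hDdouble, Epart_neg, Epart_neg, contr2_neg_neg] at hfirst_dual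
  simp only [Bpart_eq_Epart_rightDual]
  linear_combination (1/4) * η n n * hlast + (1/2) * hfirst - (1/2) * hfirst_dual

end IsDoubleForm

end ElectricMagnetic

/-- Besides Weyl candidates, this covers the curvature tensors of Einstein metrics, by
`IsDoubleForm.leftDual_eq_rightDual_of_ricci_eq`. -/
theorem stmt_3_general {C : T4} (hC : IsDoubleForm C) (hdual : leftDual C = rightDual C) (n : V4) :
    (1/8) * contr4 C C * η n n ^ 2 =
      contr2 (Epart C n) (Epart C n) - contr2 (Bpart C n) (Bpart C n) ∧
    (1/8) * contr4 C (rightDual C) * η n n ^ 2 = 2 * contr2 (Epart C n) (Bpart C n) := by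
  refine ⟨hC.contr4_mul_η_sq hC hdual hdual n, ?_⟩
  have hdual' : leftDual (rightDual C) = rightDual (rightDual C) := by
    rw [hC.rightDual_rightDual, ← hdual, hC.leftDual_leftDual]
  have hB : Bpart (rightDual C) n = -Epart C n := by
    rw [Bpart_eq_Epart_rightDual, hC.rightDual_rightDual, Epart_neg]
  rw [hC.contr4_mul_η_sq hC.isDoubleForm_rightDual hdual hdual' n, hB,
    ← Bpart_eq_Epart_rightDual, contr2_neg_right, contr2_comm (Bpart C n)]
  ring

namespace IsWeyl

variable {C : T4}

theorem isDoubleForm (hC : IsWeyl C) : IsDoubleForm C where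
  left c d a b := by simpa only [eval4_e4] using hC.1 (e4 a) (e4 b) (e4 c) (e4 d)
  right a b c d := by simpa only [eval4_e4] using hC.2.1 (e4 a) (e4 b) (e4 c) (e4 d)

theorem leftDual_eq_rightDual (hC : IsWeyl C) : leftDual C = rightDual C := by
  obtain ⟨-, -, hpair, -, htrace⟩ := id hC
  refine hC.isDoubleForm.leftDual_eq_rightDual_of_ricci_eq (s := 0) (fun b d => ?_)
    fun a b c d => ?_
  · simpa only [eval4_e4, ricci, zero_mul] using htrace (e4 b) (e4 d)
  · simpa only [eval4_e4] using hpair (e4 a) (e4 b) (e4 c) (e4 d)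

end IsWeyl

/-- the quadratic Weyl scalars split as
`(1/8) C^{μνλρ}C_{μνλρ} = E_{μν}E^{μν} − B_{μν}B^{μν}` and
`(1/8) C^{μνλρ}(C*)_{μνλρ} = 2 E^{μν}B_{μν}`. -/
theorem stmt_3 (C : T4) (hC : IsWeyl C) (n : V4) (hn : η n n = -1)
    (E B : T2) (hE : E = Epart C n) (hB : B = Bpart C n) :
    (1/8) * contr4 C C = contr2 E E - contr2 B B ∧
    (1/8) * contr4 C (rightDual C) = 2 * contr2 E B := by
  subst hE hB
  simpa [hn] using stmt_3_general hC.isDoubleForm hC.leftDual_eq_rightDual n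
end
end

section
/- Let W be a Weyl candidate on Minkowski space V and n a unit timelike vector. Then the right dual W* is again a Weyl candidate, and its electric and magnetic parts with respect to n satisfy E(W*) = B(W) and B(W*) = −E(W). -/
noncomputable section

/-!
Fixing its first pair of indices, `W` becomes a family of 2-forms, and the right dual is the Hodge
star `⋆` of Lorentzian signature on each of them, so `⋆⋆ = -1` gives `W** = -W`. This yields
`B(W*) = -E(W)`, while `E(W*) = B(W)` holds by definition.

For a form antisymmetric in both pairs, each component of the Ricci trace of `W*` is one of the
cyclic sums in the first Bianchi identity of `W`. Hence `W*` is trace-free because `W` satisfies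
Bianchi, and `W*` satisfies Bianchi because the trace of `W** = -W` vanishes. Pair exchange then
comes for free, since it follows from the antisymmetries and Bianchi.
-/

section AlgebraicCurvature

variable {ι : Type*} {W : ι → ι → ι → ι → ℝ}

/-- `W` is a double 2-form: antisymmetric in its first and in its last pair of arguments. It is
stated over an arbitrary type so as to apply both to components and to evaluation on vectors. -/
structure IsDoubleForm_s9 (W : ι → ι → ι → ι → ℝ) : Prop where
  swap_first : ∀ a b c d, W a b c d = -W b a c d
  swap_last : ∀ a b c d, W a b c d = -W a b d c

/-- The first Bianchi identity, for components or for evaluation on vectors. -/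
def FirstBianchi (W : ι → ι → ι → ι → ℝ) : Prop :=
  ∀ a b c d, W a b c d + W a c d b + W a d b c = 0

theorem IsDoubleForm_s9.pair_exchange (hW : IsDoubleForm_s9 W) (hB : FirstBianchi W) (a b c d : ι) :
    W a b c d = W c d a b := by
  -- The four Bianchi identities are combined with signs `+ - - +`; all other components cancel.
  linarith [hB a b c d, hB b c d a, hB c d a b, hB d a b c,
    hW.swap_first b a c d, hW.swap_first d c a b, hW.swap_first d a b c, hW.swap_first b c d a,
    hW.swap_first c a b d, hW.swap_last a c b d, hW.swap_first d b c a, hW.swap_last b d c a]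

end AlgebraicCurvature

theorem sum_ηm_mul (f : Fin 4 → Fin 4 → ℝ) :
    ∑ a, ∑ b, ηm a b * f a b = ∑ a, ηm a a * f a a :=
  Fintype.sum_congr _ _ fun a =>
    Fintype.sum_eq_single a fun b hb => by simp only [ηm, if_neg hb.symm, zero_mul]

theorem ricci_neg (W : T4) : ricci (-W) = -ricci W := by
  ext b d
  simp only [ricci, Pi.neg_apply, mul_neg, Finset.sum_neg_distrib]

theorem ricci_apply_of_isDoubleForm {W : T4} (hW : IsDoubleForm_s9 W) (b d : Fin 4) :
    ricci W b d = ∑ a, ηm a a * W b a d a := by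
  rw [ricci, sum_ηm_mul]
  refine Fintype.sum_congr _ _ fun a => ?_
  rw [hW.swap_first, hW.swap_last, neg_neg]

section Evaluation

theorem forall_eval4_eq_iff {W W' : T4} :
    (∀ x y z w, eval4 W x y z w = eval4 W' x y z w) ↔ ∀ a b c d, W a b c d = W' a b c d := by
  refine ⟨fun h a b c d => ?_, fun h x y z w => ?_⟩
  · simpa only [eval4_e4] using h (e4 a) (e4 b) (e4 c) (e4 d)
  · simp only [eval4, h]

theorem eval4_add (W W' : T4) (x y z w : V4) :
    eval4 (W + W') x y z w = eval4 W x y z w + eval4 W' x y z w := by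
  simp only [eval4, Pi.add_apply, add_mul, Finset.sum_add_distrib]

theorem eval4_neg (W : T4) (x y z w : V4) : eval4 (-W) x y z w = -eval4 W x y z w := by
  simp only [eval4, Pi.neg_apply, neg_mul, Finset.sum_neg_distrib]

theorem eval4_zero (x y z w : V4) : eval4 0 x y z w = 0 := by
  simp only [eval4, Pi.zero_apply, zero_mul, Finset.sum_const_zero]

theorem eval4_swap_first (W : T4) (x y z w : V4) :
    eval4 W y x z w = eval4 (fun a b c d => W b a c d) x y z w := by
  unfold eval4
  rw [Finset.sum_comm]
  exact Fintype.sum_congr _ _ fun a => Fintype.sum_congr _ _ fun b =>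
    Fintype.sum_congr _ _ fun c => Fintype.sum_congr _ _ fun d => by ring

theorem eval4_swap_middle (W : T4) (x y z w : V4) :
    eval4 W x z y w = eval4 (fun a b c d => W a c b d) x y z w := by
  unfold eval4
  refine Fintype.sum_congr _ _ fun a => ?_
  rw [Finset.sum_comm]
  exact Fintype.sum_congr _ _ fun b =>
    Fintype.sum_congr _ _ fun c => Fintype.sum_congr _ _ fun d => by ring

theorem eval4_swap_last (W : T4) (x y z w : V4) :
    eval4 W x y w z = eval4 (fun a b c d => W a b d c) x y z w := by
  unfold eval4
  refine Fintype.sum_congr _ _ fun a => Fintype.sum_congr _ _ fun b => ?_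
  rw [Finset.sum_comm]
  exact Fintype.sum_congr _ _ fun c => Fintype.sum_congr _ _ fun d => by ring

theorem isDoubleForm_eval4_iff {W : T4} : IsDoubleForm_s9 (eval4 W) ↔ IsDoubleForm_s9 W := by
  have first : (∀ x y z w, eval4 W x y z w = -eval4 W y x z w) ↔
      ∀ a b c d, W a b c d = -W b a c d := by
    simpa only [eval4_neg, Pi.neg_apply, ← eval4_swap_first W] using
      forall_eval4_eq_iff (W := W) (W' := -fun a b c d => W b a c d)
  have last : (∀ x y z w, eval4 W x y z w = -eval4 W x y w z) ↔
      ∀ a b c d, W a b c d = -W a b d c := by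
    simpa only [eval4_neg, Pi.neg_apply, ← eval4_swap_last W] using
      forall_eval4_eq_iff (W := W) (W' := -fun a b c d => W a b d c)
  exact ⟨fun h => ⟨first.1 h.1, last.1 h.2⟩, fun h => ⟨first.2 h.1, last.2 h.2⟩⟩

theorem firstBianchi_eval4_iff {W : T4} : FirstBianchi (eval4 W) ↔ FirstBianchi W := by
  have cyclicSum (x y z w : V4) :
      eval4 W x y z w + eval4 W x z w y + eval4 W x w y z =
        eval4 (W + (fun a b c d => W a c d b) + fun a b c d => W a d b c) x y z w := by
    rw [eval4_swap_last W x z y w, eval4_swap_middle _ x y z w,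
      eval4_swap_middle W x y w z, eval4_swap_last _ x y z w, eval4_add, eval4_add]
  simp only [FirstBianchi, cyclicSum]
  simpa only [eval4_zero] using! forall_eval4_eq_iff (W' := 0)

theorem sum_ηm_mul_eval4 (W : T4) (x y : V4) :
    ∑ a, ∑ c, ηm a c * eval4 W (e4 a) x (e4 c) y = ∑ b, ∑ d, ricci W b d * x b * y d := by
  have contract (a c : Fin 4) :
      eval4 W (e4 a) x (e4 c) y = ∑ b, ∑ d, W a b c d * x b * y d := by
    simp [eval4, e4, Pi.single_apply]
  simp only [contract, sum_ηm_mul, ricci]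
  simp only [Finset.mul_sum, Finset.sum_mul, mul_assoc]
  rw [Finset.sum_comm]
  exact Fintype.sum_congr _ _ fun b => Finset.sum_comm

theorem sum_ηm_mul_eval4_eq_zero_iff {W : T4} :
    (∀ x y, ∑ a, ∑ c, ηm a c * eval4 W (e4 a) x (e4 c) y = 0) ↔ ricci W = 0 := by
  refine ⟨fun h => ?_, fun h x y => ?_⟩
  · ext b d
    simpa only [eval4_e4] using! h (e4 b) (e4 d)
  · simp only [sum_ηm_mul_eval4, h, Pi.zero_apply, zero_mul, Finset.sum_const_zero]

theorem isWeyl_iff {W : T4} : IsWeyl W ↔ IsDoubleForm_s9 W ∧ FirstBianchi W ∧ ricci W = 0 := by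
  rw [← isDoubleForm_eval4_iff, ← firstBianchi_eval4_iff, ← sum_ηm_mul_eval4_eq_zero_iff]
  exact ⟨fun ⟨first, last, _, bianchi, trace⟩ => ⟨⟨first, last⟩, bianchi, trace⟩,
    fun ⟨hW, bianchi, trace⟩ =>
      ⟨hW.swap_first, hW.swap_last, hW.pair_exchange bianchi, bianchi, trace⟩⟩

end Evaluation

section HodgeStar

/-- The Hodge star `(⋆F)_{cd} = ½ F^{ij} η_{ijcd}` on the components of a 2-form. -/
def hodgeStar (F : T2) : T2 := fun c d =>
  (1 / 2) * ∑ k, ∑ l, ∑ i, ∑ j, F i j * ηm i k * ηm j l * volc k l c d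

theorem rightDual_eq_hodgeStar (W : T4) (a b : Fin 4) : rightDual W a b = hodgeStar (W a b) :=
  rfl

theorem volc_eq_vandermonde (a b c d : Fin 4) :
    volc a b c d =
      ((b - a) * (c - a) * (d - a) * (c - b) * (d - b) * (d - c) : ℝ) / 12 := by
  -- The Vandermonde matrix with nodes `0, 1, 2, 3` has determinant `12`, and multiplying it on the
  -- left by the rows `e_a, e_b, e_c, e_d` gives the Vandermonde matrix with nodes `a, b, c, d`.
  let M : Matrix (Fin 4) (Fin 4) ℝ := Matrix.of ![e4 a, e4 b, e4 c, e4 d]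
  let V (v : Fin 4 → Fin 4) : Matrix (Fin 4) (Fin 4) ℝ := Matrix.vandermonde fun i => (v i : ℝ)
  have hM : M * V id = V ![a, b, c, d] := by
    ext i j
    fin_cases i <;> simp [M, V, Matrix.mul_apply, e4, Pi.single_apply, Matrix.vandermonde_apply]
  have hV : (V id).det = 12 := by
    norm_num [V, Matrix.det_vandermonde, Fin.prod_univ_succ]
  rw [eq_div_iff (by norm_num), ← hV]
  calc
    volc a b c d * (V id).det = (V ![a, b, c, d]).det := by rw [← hM, Matrix.det_mul]; rfl
    _ = _ := by simp [V, Matrix.det_vandermonde, Fin.prod_univ_succ, mul_assoc]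

theorem volc_swap_last (a b c d : Fin 4) : volc a b d c = -volc a b c d := by
  simp only [volc_eq_vandermonde]
  ring

theorem hodgeStar_apply (F : T2) (c d : Fin 4) :
    hodgeStar F c d = (1 / 2) * ∑ i, ∑ j, ηm i i * ηm j j * F i j * volc i j c d := by
  simp [hodgeStar, ηm]

theorem hodgeStar_swap (F : T2) (c d : Fin 4) : hodgeStar F d c = -hodgeStar F c d := by
  simp only [hodgeStar, volc_swap_last _ _ c d, mul_neg, Finset.sum_neg_distrib]

variable {F : T2}

theorem hodgeStar_eq_of_antisymm (hF : ∀ a b, F a b = -F b a) :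
    hodgeStar F =
      ![![0, F 2 3, F 3 1, F 1 2],
        ![F 3 2, 0, F 3 0, F 0 2],
        ![F 1 3, F 0 3, 0, F 1 0],
        ![F 2 1, F 2 0, F 0 1, 0]] := by
  ext c d
  rw [hodgeStar_apply]
  fin_cases c <;> fin_cases d <;>
    simp [Fin.sum_univ_four, ηm, volc_eq_vandermonde,
      hF 1 0, hF 2 0, hF 3 0, hF 2 1, hF 3 1, hF 3 2] <;>
    ring

theorem hodgeStar_hodgeStar (hF : ∀ a b, F a b = -F b a) : hodgeStar (hodgeStar F) = -F := by
  rw [hodgeStar_eq_of_antisymm fun a b => hodgeStar_swap F b a, hodgeStar_eq_of_antisymm hF]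
  ext c d
  have diagonal (a : Fin 4) : F a a = 0 := self_eq_neg.1 (hF a a)
  fin_cases c <;> fin_cases d <;> simp [diagonal, ← hF]

theorem cyclic_sum_eq_zero_iff {T : Fin 4 → T2} (hT : ∀ a b c, T a b c = -T a c b) :
    (∀ a b c, T a b c + T b c a + T c a b = 0) ↔
      T 1 2 3 + T 2 3 1 + T 3 1 2 = 0 ∧ T 0 2 3 + T 2 3 0 + T 3 0 2 = 0 ∧
      T 0 3 1 + T 3 1 0 + T 1 0 3 = 0 ∧ T 0 1 2 + T 1 2 0 + T 2 0 1 = 0 := by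
  refine ⟨fun h => ⟨h 1 2 3, h 0 2 3, h 0 3 1, h 0 1 2⟩, fun h a b c => ?_⟩
  -- The cyclic sum is alternating, so its values on one ordering of each triple determine it.
  fin_cases a <;> fin_cases b <;> fin_cases c <;> grind

theorem hodgeStar_trace_eq_zero_iff {T : Fin 4 → T2} (hT : ∀ a b c, T a b c = -T a c b) :
    (∀ c, ∑ a, ηm a a * hodgeStar (T a) c a = 0) ↔
      ∀ a b c, T a b c + T b c a + T c a b = 0 := by
  have component : (fun c => ∑ a, ηm a a * hodgeStar (T a) c a) =
      ![T 1 2 3 + T 2 3 1 + T 3 1 2, T 0 2 3 + T 2 3 0 + T 3 0 2,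
        T 0 3 1 + T 3 1 0 + T 1 0 3, T 0 1 2 + T 1 2 0 + T 2 0 1] := by
    ext c
    simp only [hodgeStar_eq_of_antisymm (hT _), Fin.sum_univ_four]
    fin_cases c <;> simp [ηm, hT 0 3 2, hT 0 1 3, hT 0 2 1]
    ring
  rw [cyclic_sum_eq_zero_iff hT]
  simp [congrFun component, Fin.forall_fin_succ]

end HodgeStar

section RightDual

variable {W : T4}

theorem rightDual_rightDual (hW : ∀ a b c d, W a b c d = -W a b d c) :
    rightDual (rightDual W) = -W := by
  funext a b
  simp only [rightDual_eq_hodgeStar, hodgeStar_hodgeStar (hW a b), Pi.neg_apply]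

theorem isDoubleForm_rightDual (hW : IsDoubleForm_s9 W) : IsDoubleForm_s9 (rightDual W) where
  swap_first a b c d := by
    simp only [rightDual, hW.swap_first a b, neg_mul, Finset.sum_neg_distrib, mul_neg]
  swap_last a b c d := by
    rw [rightDual_eq_hodgeStar, hodgeStar_swap]

theorem ricci_rightDual_eq_zero_iff (hW : IsDoubleForm_s9 W) :
    ricci (rightDual W) = 0 ↔ FirstBianchi W := by
  have hdual := isDoubleForm_rightDual hW
  simp only [funext_iff, ricci_apply_of_isDoubleForm hdual, rightDual_eq_hodgeStar]
  exact forall_congr' fun a => hodgeStar_trace_eq_zero_iff (hW.swap_last a)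

theorem firstBianchi_rightDual_iff (hW : IsDoubleForm_s9 W) :
    FirstBianchi (rightDual W) ↔ ricci W = 0 := by
  rw [← ricci_rightDual_eq_zero_iff (isDoubleForm_rightDual hW),
    rightDual_rightDual hW.swap_last, ricci_neg, neg_eq_zero]

theorem isWeyl_rightDual (hW : IsWeyl W) : IsWeyl (rightDual W) := by
  obtain ⟨doubleForm, bianchi, traceFree⟩ := isWeyl_iff.1 hW
  exact isWeyl_iff.2 ⟨isDoubleForm_rightDual doubleForm,
    (firstBianchi_rightDual_iff doubleForm).2 traceFree,
    (ricci_rightDual_eq_zero_iff doubleForm).2 bianchi⟩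

theorem Bpart_rightDual (hW : ∀ a b c d, W a b c d = -W a b d c) (n : V4) (a b : Fin 4) :
    Bpart (rightDual W) n a b = -Epart W n a b := by
  simp only [Bpart, Epart, rightDual_rightDual hW, eval4_neg]

end RightDual

theorem stmt_9_general (W : T4) (hW : IsWeyl W) (n : V4) :
    IsWeyl (rightDual W) ∧
    (∀ a b, Epart (rightDual W) n a b = Bpart W n a b) ∧
    (∀ a b, Bpart (rightDual W) n a b = -(Epart W n a b)) :=
  ⟨isWeyl_rightDual hW, fun _ _ => rfl,
    Bpart_rightDual (isWeyl_iff.1 hW).1.swap_last n⟩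

/-- the right dual of a Weyl candidate is again a Weyl candidate, with
`E(W*) = B(W)` and `B(W*) = −E(W)`. -/
theorem stmt_9 (W : T4) (hW : IsWeyl W) (n : V4) (hn : η n n = -1) :
    IsWeyl (rightDual W) ∧
    (∀ a b, Epart (rightDual W) n a b = Bpart W n a b) ∧
    (∀ a b, Bpart (rightDual W) n a b = -(Epart W n a b)) :=
  stmt_9_general W hW n
end
end
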